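/- Let n be an even integer with n ≥ 4, let C ∈ Ω_n, and let Ĉ := C − μ_element(C)·(J_n − I_n). Then the variance of the total compatibility over all pairings satisfies σ²_sum(C,C) = (n(n−2)/(2(n−3)))·σ²_element(C,C) − (1/((n−1)(n−3)))·Σ_{k=1}^n ⟨R_k,Ĉ⟩². -/

import Mathlib

open Finset

def hollowSym {n : ℕ} (C : Matrix (Fin n) (Fin n) ℝ) : Prop :=
  C.IsSymm ∧ ∀ i, C i i = 0

noncomputable def innerH {n : ℕ} (X C : Matrix (Fin n) (Fin n) ℝ) : ℝ :=
  (1 / 2) * ∑ i, ∑ j, X i j * C i j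

noncomputable def adjR {n : ℕ} (i : Fin n) : Matrix (Fin n) (Fin n) ℝ :=
  Matrix.of fun k l => if k ≠ l ∧ (i = k ∨ i = l) then 1 else 0

def IsPairing {n : ℕ} (S : Matrix (Fin n) (Fin n) ℝ) : Prop :=
  S.IsSymm ∧ (∀ i, S i i = 0) ∧ (∀ i j, S i j = 0 ∨ S i j = 1) ∧ (∀ i, ∑ j, S i j = 1)

noncomputable def pairings (n : ℕ) : Finset (Matrix (Fin n) (Fin n) ℝ) :=
  (Finset.univ.filter (fun σ : Equiv.Perm (Fin n) => ∀ i, σ i ≠ i ∧ σ (σ i) = i)).image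
    (fun σ => Matrix.of fun i j => if σ i = j then (1 : ℝ) else 0)

noncomputable def pairSum {n : ℕ} (C : Matrix (Fin n) (Fin n) ℝ) : ℝ :=
  ∑ i, ∑ j ∈ Finset.univ.filter (fun j => i < j), C i j

noncomputable def muEl {n : ℕ} (C : Matrix (Fin n) (Fin n) ℝ) : ℝ :=
  (2 / ((n : ℝ) * ((n : ℝ) - 1))) * pairSum C

noncomputable def Jmat (n : ℕ) : Matrix (Fin n) (Fin n) ℝ := Matrix.of fun _ _ => 1

noncomputable def muSum (n : ℕ) (C : Matrix (Fin n) (Fin n) ℝ) : ℝ :=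
  (1 / (Nat.doubleFactorial (n - 1) : ℝ)) * ∑ S ∈ pairings n, innerH S C

noncomputable def sig2El {n : ℕ} (C : Matrix (Fin n) (Fin n) ℝ) : ℝ :=
  (2 / ((n : ℝ) * ((n : ℝ) - 1))) *
    ∑ i, ∑ j ∈ Finset.univ.filter (fun j => i < j), (C i j - muEl C) ^ 2

noncomputable def sig2Sum (n : ℕ) (C : Matrix (Fin n) (Fin n) ℝ) : ℝ :=
  (1 / (Nat.doubleFactorial (n - 1) : ℝ)) *
    ∑ S ∈ pairings n, (innerH S C - muSum n C) ^ 2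

/-!
View a pairing as a fixed-point-free involution `σ`, so that its total compatibility is half of
`T σ = ∑ i, X i (σ i)`. Conjugation by transpositions shows that, for a uniformly random `σ`, the
value `σ i` is uniform on the points other than `i`, and that, given `σ i = j`, the value `σ k` is
uniform on the points other than `i`, `j`, `k` whenever `k ≠ i, j`. For hollow symmetric `X` with
row sums `r` and total `S`, summing over `k` gives
`(n - 3) E[T σ | σ i = j] = 2 (n - 2) X i j + S - 2 r i - 2 r j`.
Averaging this against `X i j` yields `E[(T σ)²]`. Replacing `C` by `Ĉ` subtracts from `T` its mean
and makes `S` vanish, so that `E[(T σ)²]` for `X = Ĉ` is four times the variance sought.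
-/

section FixedPointFreeInvolutions

variable {α : Type*} [DecidableEq α]

theorem card_nsmul_sum_apply {M : Type*} [AddCommMonoid M] {A : Finset (Equiv.Perm α)}
    {s : Finset α} {k : α} (hk : k ∉ s) (hA : ∀ σ ∈ A, σ k ∈ s)
    (hconj : ∀ σ ∈ A, ∀ x ∈ s, ∀ y ∈ s, Equiv.swap x y * σ * (Equiv.swap x y)⁻¹ ∈ A)
    (f : α → M) :
    #s • ∑ σ ∈ A, f (σ k) = #A • ∑ l ∈ s, f l := by
  -- This involution of `A ×ˢ s` exchanges the value `σ k` with the second coordinate.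
  let exchange : Equiv.Perm α × α → Equiv.Perm α × α := fun p ↦
    (Equiv.swap (p.1 k) p.2 * p.1 * (Equiv.swap (p.1 k) p.2)⁻¹, p.1 k)
  have exchange_apply (p) (hp : p ∈ A ×ˢ s) : (exchange p).1 k = p.2 := by
    obtain ⟨hσ, hx⟩ := mem_product.1 hp
    have hkσ : k ≠ p.1 k := fun h ↦ hk (h ▸ hA _ hσ)
    have hkx : k ≠ p.2 := fun h ↦ hk (h ▸ hx)
    simp [exchange, Equiv.swap_apply_of_ne_of_ne hkσ hkx]
  have exchange_mem (p) (hp : p ∈ A ×ˢ s) : exchange p ∈ A ×ˢ s := by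
    obtain ⟨hσ, hx⟩ := mem_product.1 hp
    exact mem_product.2 ⟨hconj _ hσ _ (hA _ hσ) _ hx, hA _ hσ⟩
  have exchange_exchange (p) (hp : p ∈ A ×ˢ s) : exchange (exchange p) = p := by
    refine Prod.ext ?_ (exchange_apply p hp)
    change Equiv.swap ((exchange p).1 k) (p.1 k) * (exchange p).1 *
      (Equiv.swap ((exchange p).1 k) (p.1 k))⁻¹ = p.1
    rw [exchange_apply p hp, Equiv.swap_comm]
    simp [exchange, mul_assoc]
  calc #s • ∑ σ ∈ A, f (σ k)
      = ∑ p ∈ A ×ˢ s, f (p.1 k) := by simp only [sum_product_right, sum_const]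
    _ = ∑ p ∈ A ×ˢ s, f p.2 :=
      sum_nbij' exchange exchange exchange_mem exchange_mem exchange_exchange exchange_exchange
        fun _ _ ↦ rfl
    _ = #A • ∑ l ∈ s, f l := by simp only [sum_product, sum_const]

variable [Fintype α]

variable (α) in
/-- The fixed-point-free involutions of `α`, encoding the pairings of `α`: the permutation `σ`
pairs `i` with `σ i`. -/
def pairingPerms : Finset (Equiv.Perm α) := {σ | ∀ i, σ i ≠ i ∧ σ (σ i) = i}

theorem mem_pairingPerms {σ : Equiv.Perm α} :
    σ ∈ pairingPerms α ↔ ∀ i, σ i ≠ i ∧ σ (σ i) = i := by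
  simp [pairingPerms]

theorem conj_mem_pairingPerms {σ : Equiv.Perm α} (hσ : σ ∈ pairingPerms α) (p : Equiv.Perm α) :
    p * σ * p⁻¹ ∈ pairingPerms α := by
  rw [mem_pairingPerms] at hσ ⊢
  refine fun i ↦ ⟨fun h ↦ (hσ (p⁻¹ i)).1 ?_, by simp [(hσ _).2]⟩
  rwa [Equiv.Perm.mul_apply, Equiv.Perm.mul_apply, ← Equiv.Perm.eq_inv_iff_eq] at h

theorem mem_pairingPerms_iff_cycleType {σ : Equiv.Perm α} {m : ℕ} (hm : Fintype.card α = 2 * m) :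
    σ ∈ pairingPerms α ↔ σ.cycleType = Multiset.replicate m 2 := by
  have := Fact.mk Nat.prime_two
  have fixedPointFree_iff : (∀ i, σ i ≠ i) ↔ #σ.support = 2 * m := by
    rw [← hm, card_eq_iff_eq_univ, eq_univ_iff_forall]
    simp only [Equiv.Perm.mem_support]
  have involutive_iff : (∀ i, σ (σ i) = i) ↔ ∀ c ∈ σ.cycleType, c = 2 := by
    rw [← Equiv.Perm.pow_prime_eq_one_iff, Equiv.ext_iff]
    simp only [sq, Equiv.Perm.mul_apply, Equiv.Perm.one_apply]
  rw [mem_pairingPerms, forall_and, fixedPointFree_iff, involutive_iff, Multiset.eq_replicate,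
    ← σ.sum_cycleType]
  refine and_congr_left fun h ↦ ?_
  rw [Multiset.eq_replicate_card.2 h, Multiset.sum_replicate, Multiset.card_replicate]
  lia

theorem card_pairingPerms (h : Even (Fintype.card α)) :
    #(pairingPerms α) = (Fintype.card α - 1).doubleFactorial := by
  obtain ⟨m, hm⟩ := even_iff_exists_two_mul.1 h
  have hcount : #(pairingPerms α) * (2 * m).doubleFactorial = (2 * m).factorial := by
    have hprod : ∏ c ∈ (Multiset.replicate m 2).toFinset,
        ((Multiset.replicate m 2).count c).factorial = m.factorial := by
      rcases eq_or_ne m 0 with rfl | hm0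
      · simp
      · rw [Multiset.toFinset_replicate, if_neg hm0, prod_singleton, Multiset.count_replicate_self]
    have hcycle := Equiv.Perm.card_of_cycleType_mul_eq α (Multiset.replicate m 2)
    have hsum : (Multiset.replicate m 2).sum = Fintype.card α := by
      rw [Multiset.sum_replicate, smul_eq_mul, hm, mul_comm]
    rw [if_pos ⟨hsum.le, fun a ha ↦ (Multiset.eq_of_mem_replicate ha).ge⟩, hprod, hsum,
      Nat.sub_self, Nat.factorial_zero, one_mul, Multiset.prod_replicate,
      ← Nat.doubleFactorial_two_mul, hm] at hcycle
    rwa [filter_congr fun σ _ ↦ (mem_pairingPerms_iff_cycleType hm).symm, filter_mem_eq_inter,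
      univ_inter] at hcycle
  have hfactorial : (2 * m).factorial
      = (2 * m - 1).doubleFactorial * (2 * m).doubleFactorial := by
    cases m with
    | zero => rfl
    | succ m => exact (Nat.factorial_eq_mul_doubleFactorial (2 * m + 1)).trans (mul_comm _ _)
  rw [hm]
  exact Nat.eq_of_mul_eq_mul_right (Nat.doubleFactorial_pos _) (hcount.trans hfactorial)

variable {R : Type*} [CommRing R]

theorem card_sub_one_mul_sum_pairingPerms_apply (k : α) (f : α → R) :
    ((Fintype.card α : R) - 1) * ∑ σ ∈ pairingPerms α, f (σ k)
      = #(pairingPerms α) * ∑ l ∈ {k}ᶜ, f l := by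
  have h := card_nsmul_sum_apply (A := pairingPerms α) (s := {k}ᶜ) (k := k) (by simp)
    (fun σ hσ ↦ by simp [(mem_pairingPerms.1 hσ k).1])
    (fun σ hσ x _ y _ ↦ conj_mem_pairingPerms hσ _) f
  have hcard : 1 ≤ Fintype.card α := Fintype.card_pos_iff.2 ⟨k⟩
  simpa only [nsmul_eq_mul, card_compl, card_singleton, Nat.cast_sub hcard, Nat.cast_one] using h

theorem card_sub_one_mul_card_pairingPerms_apply_eq {i j : α} (hij : i ≠ j) :
    ((Fintype.card α : R) - 1) * #{σ ∈ pairingPerms α | σ i = j} = #(pairingPerms α) := by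
  have h := card_sub_one_mul_sum_pairingPerms_apply (R := R) i (fun l ↦ if l = j then 1 else 0)
  rwa [sum_boole, sum_ite_eq', if_pos (by simpa using hij.symm), mul_one] at h

theorem card_sub_three_mul_sum_pairingPerms_apply {i j k : α} (hij : i ≠ j) (hki : k ≠ i)
    (hkj : k ≠ j) (f : α → R) :
    ((Fintype.card α : R) - 3) * ∑ σ ∈ pairingPerms α with σ i = j, f (σ k)
      = #{σ ∈ pairingPerms α | σ i = j} * ∑ l ∈ {i, j, k}ᶜ, f l := by
  have hcard : #{i, j, k} = 3 := card_eq_three.2 ⟨i, j, k, hij, hki.symm, hkj.symm, rfl⟩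
  have hmaps : ∀ σ ∈ {σ ∈ pairingPerms α | σ i = j}, σ k ∈ ({i, j, k} : Finset α)ᶜ := by
    intro σ hσ
    rw [mem_filter, mem_pairingPerms] at hσ
    have hσk := hσ.1 k
    have hσi := hσ.1 i
    simp only [mem_compl, mem_insert, mem_singleton]
    grind
  have hconj : ∀ σ ∈ {σ ∈ pairingPerms α | σ i = j}, ∀ x ∈ ({i, j, k} : Finset α)ᶜ,
      ∀ y ∈ ({i, j, k} : Finset α)ᶜ,
      Equiv.swap x y * σ * (Equiv.swap x y)⁻¹ ∈ {σ ∈ pairingPerms α | σ i = j} := by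
    intro σ hσ x hx y hy
    rw [mem_filter] at hσ ⊢
    simp only [mem_compl, mem_insert, mem_singleton, not_or] at hx hy
    refine ⟨conj_mem_pairingPerms hσ.1 _, ?_⟩
    rw [Equiv.swap_inv, Equiv.Perm.mul_apply, Equiv.Perm.mul_apply,
      Equiv.swap_apply_of_ne_of_ne (Ne.symm hx.1) (Ne.symm hy.1), hσ.2,
      Equiv.swap_apply_of_ne_of_ne (Ne.symm hx.2.1) (Ne.symm hy.2.1)]
  have h := card_nsmul_sum_apply (by simp) hmaps hconj f
  have hle : 3 ≤ Fintype.card α := hcard ▸ card_le_univ _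
  simpa only [nsmul_eq_mul, card_compl, hcard, Nat.cast_sub hle, Nat.cast_ofNat] using h

/-- The sum of the entries of `X` selected by `σ`. Each pair `{i, σ i}` of a pairing is counted
twice, as `(i, σ i)` and as `(σ i, i)`, so this is twice the total compatibility. -/
def pairingWeight (X : Matrix α α R) (σ : Equiv.Perm α) : R := ∑ i, X i (σ i)

theorem card_sub_one_mul_sum_pairingWeight {X : Matrix α α R} (hdiag : ∀ i, X i i = 0) :
    ((Fintype.card α : R) - 1) * ∑ σ ∈ pairingPerms α, pairingWeight X σ
      = #(pairingPerms α) * ∑ i, ∑ j, X i j := by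
  simp only [pairingWeight]
  rw [sum_comm, mul_sum, mul_sum]
  refine sum_congr rfl fun i _ ↦ ?_
  rw [card_sub_one_mul_sum_pairingPerms_apply, ← sum_compl_add_sum {i} (X i), sum_singleton, hdiag,
    add_zero]

theorem sum_compl_pair_sum_compl_triple {X : Matrix α α R} (hsymm : X.IsSymm)
    (hdiag : ∀ i, X i i = 0) {i j : α} (hij : i ≠ j) :
    ∑ k ∈ {i, j}ᶜ, ∑ l ∈ {i, j, k}ᶜ, X k l
      = (∑ k, ∑ l, X k l) - 2 * ∑ l, X i l - 2 * ∑ l, X j l + 2 * X i j := by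
  have hrow (k : α) (hk : k ∈ ({i, j} : Finset α)ᶜ) :
      ∑ l ∈ {i, j, k}ᶜ, X k l = ∑ l, X k l - X i k - X j k := by
    have hk' : k ≠ i ∧ k ≠ j := by simpa using hk
    rw [← sum_compl_add_sum {i, j, k} (X k), sum_insert (by simp [hij, hk'.1.symm]),
      sum_pair hk'.2.symm, hdiag, hsymm.apply i k, hsymm.apply j k]
    ring
  have hcompl (f : α → R) : ∑ k ∈ {i, j}ᶜ, f k = ∑ k, f k - f i - f j := by
    rw [← sum_compl_add_sum {i, j} f, sum_pair hij]
    ring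
  rw [sum_congr rfl hrow, sum_sub_distrib, sum_sub_distrib, hcompl, hcompl, hcompl, hdiag, hdiag,
    hsymm.apply i j]
  ring

theorem card_sub_three_mul_sum_pairingWeight_of_apply_eq {X : Matrix α α R} (hsymm : X.IsSymm)
    (hdiag : ∀ i, X i i = 0) {i j : α} (hij : i ≠ j) :
    ((Fintype.card α : R) - 3) * ∑ σ ∈ pairingPerms α with σ i = j, pairingWeight X σ
      = #{σ ∈ pairingPerms α | σ i = j} * (2 * ((Fintype.card α : R) - 2) * X i j
        + (∑ k, ∑ l, X k l) - 2 * ∑ l, X i l - 2 * ∑ l, X j l) := by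
  have hsplit : ∀ σ ∈ {σ ∈ pairingPerms α | σ i = j},
      pairingWeight X σ = ∑ k ∈ {i, j}ᶜ, X k (σ k) + 2 * X i j := by
    intro σ hσ
    rw [mem_filter, mem_pairingPerms] at hσ
    have hσj : σ j = i := hσ.2 ▸ (hσ.1 i).2
    rw [pairingWeight, ← sum_compl_add_sum {i, j}, sum_pair hij, hσ.2, hσj, hsymm.apply i j,
      two_mul]
  have houter : ((Fintype.card α : R) - 3) *
      ∑ k ∈ {i, j}ᶜ, ∑ σ ∈ pairingPerms α with σ i = j, X k (σ k)
      = #{σ ∈ pairingPerms α | σ i = j} * ∑ k ∈ {i, j}ᶜ, ∑ l ∈ {i, j, k}ᶜ, X k l := by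
    rw [mul_sum, mul_sum]
    refine sum_congr rfl fun k hk ↦ ?_
    have hk' : k ≠ i ∧ k ≠ j := by simpa using hk
    exact card_sub_three_mul_sum_pairingPerms_apply hij hk'.1 hk'.2 (X k)
  rw [sum_congr rfl hsplit, sum_add_distrib, sum_comm, mul_add, houter,
    sum_compl_pair_sum_compl_triple hsymm hdiag hij, sum_const, nsmul_eq_mul]
  ring

theorem sum_pairingWeight_sq (X : Matrix α α R) :
    ∑ σ ∈ pairingPerms α, pairingWeight X σ ^ 2
      = ∑ i, ∑ j, X i j * ∑ σ ∈ pairingPerms α with σ i = j, pairingWeight X σ := by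
  have hfiber (i : α) : ∑ σ ∈ pairingPerms α, X i (σ i) * pairingWeight X σ
      = ∑ j, X i j * ∑ σ ∈ pairingPerms α with σ i = j, pairingWeight X σ := by
    rw [← sum_fiberwise _ (fun σ ↦ σ i)]
    refine sum_congr rfl fun j _ ↦ ?_
    rw [mul_sum]
    exact sum_congr rfl fun σ hσ ↦ by rw [(mem_filter.1 hσ).2]
  calc ∑ σ ∈ pairingPerms α, pairingWeight X σ ^ 2
      = ∑ σ ∈ pairingPerms α, ∑ i, X i (σ i) * pairingWeight X σ :=
        sum_congr rfl fun σ _ ↦ by rw [sq, ← sum_mul, ← pairingWeight]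
    _ = ∑ i, ∑ σ ∈ pairingPerms α, X i (σ i) * pairingWeight X σ := sum_comm
    _ = _ := sum_congr rfl fun i _ ↦ hfiber i

theorem card_sub_one_mul_card_sub_three_mul_sum_pairingWeight_sq {X : Matrix α α R}
    (hsymm : X.IsSymm) (hdiag : ∀ i, X i i = 0) :
    ((Fintype.card α : R) - 1) * ((Fintype.card α : R) - 3) *
        ∑ σ ∈ pairingPerms α, pairingWeight X σ ^ 2
      = #(pairingPerms α) * (2 * ((Fintype.card α : R) - 2) * ∑ i, ∑ j, X i j ^ 2
        + (∑ i, ∑ j, X i j) ^ 2 - 4 * ∑ i, (∑ j, X i j) ^ 2) := by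
  set S := ∑ i, ∑ j, X i j
  set r : α → R := fun i ↦ ∑ j, X i j
  have hterm (i j : α) : ((Fintype.card α : R) - 1) * ((Fintype.card α : R) - 3) *
      (X i j * ∑ σ ∈ pairingPerms α with σ i = j, pairingWeight X σ)
      = #(pairingPerms α) * (2 * ((Fintype.card α : R) - 2) * X i j ^ 2
        + X i j * S - 2 * (X i j * r i) - 2 * (X i j * r j)) := by
    rcases eq_or_ne i j with rfl | hij
    · simp [hdiag]
    · rw [← card_sub_one_mul_card_pairingPerms_apply_eq hij]
      linear_combination ((Fintype.card α : R) - 1) * X i j *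
        card_sub_three_mul_sum_pairingWeight_of_apply_eq hsymm hdiag hij
  have hrow : ∑ i, ∑ j, X i j * r i = ∑ i, r i ^ 2 :=
    sum_congr rfl fun i _ ↦ by rw [← sum_mul, sq]
  have hcol : ∑ i, ∑ j, X i j * r j = ∑ i, r i ^ 2 := by
    rw [sum_comm, ← hrow]
    exact sum_congr rfl fun j _ ↦ sum_congr rfl fun i _ ↦ by rw [hsymm.apply]
  have htotal : ∑ i, ∑ j, X i j * S = S ^ 2 := by simp only [← sum_mul, sq, S]
  rw [sum_pairingWeight_sq]
  simp only [mul_sum _ _ (((Fintype.card α : R) - 1) * ((Fintype.card α : R) - 3)), hterm,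
    ← mul_sum, sum_sub_distrib, sum_add_distrib, hrow, hcol, htotal]
  ring

end FixedPointFreeInvolutions

section Compatibility

variable {n : ℕ}

theorem card_pairingPerms_fin (he : Even n) :
    #(pairingPerms (Fin n)) = (n - 1).doubleFactorial := by
  simpa only [Fintype.card_fin] using card_pairingPerms (α := Fin n) (by rwa [Fintype.card_fin])

variable {C : Matrix (Fin n) (Fin n) ℝ}

variable (C) in
theorem sum_pairings_innerH {M : Type*} [AddCommMonoid M] (f : ℝ → M) :
    ∑ S ∈ pairings n, f (innerH S C) = ∑ σ ∈ pairingPerms (Fin n), f (pairingWeight C σ / 2) := by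
  have hinner (σ : Equiv.Perm (Fin n)) :
      innerH (Matrix.of fun i j ↦ if σ i = j then (1 : ℝ) else 0) C = pairingWeight C σ / 2 := by
    simp only [innerH, pairingWeight, Matrix.of_apply, ite_mul, one_mul, zero_mul, sum_ite_eq,
      mem_univ, if_true]
    ring
  rw [pairings, sum_image]
  · simp only [hinner]
    exact sum_congr (by ext; simp [mem_pairingPerms]) fun _ _ ↦ rfl
  · intro σ _ τ _ h
    ext i
    have hi := congrFun (congrFun h i) (σ i)
    have : τ i = σ i := by simpa using hi
    rw [this]

theorem hollowSym.sum_sum_eq_two_mul_pairSum (hC : hollowSym C) :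
    ∑ i, ∑ j, C i j = 2 * pairSum C := by
  have hsplit (i j : Fin n) :
      C i j = (if i < j then C i j else 0) + (if j < i then C j i else 0) := by
    rcases lt_trichotomy i j with h | rfl | h
    · simp [h, h.not_gt]
    · simp [hC.2]
    · simp [h, h.not_gt, hC.1.apply]
  simp only [pairSum, sum_filter]
  rw [sum_congr rfl fun i _ ↦ sum_congr rfl fun j _ ↦ hsplit i j]
  simp only [sum_add_distrib]
  rw [sum_comm (f := fun i j ↦ if j < i then C j i else 0)]
  ring

theorem hollowSym.innerH_adjR (hC : hollowSym C) (k : Fin n) :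
    innerH (adjR k) C = ∑ j, C k j := by
  have hterm (i j : Fin n) : adjR k i j * C i j
      = (if k = i then C i j else 0) + (if k = j then C j i else 0) := by
    rw [hC.1.apply i j, adjR, Matrix.of_apply]
    rcases eq_or_ne i j with rfl | hij
    · simp [hC.2]
    · rcases eq_or_ne k i with rfl | hki
      · simp [hij]
      · simp [hki, hij]
  simp only [innerH, hterm, sum_add_distrib]
  rw [sum_comm]
  simp only [sum_ite_eq, mem_univ, if_true]
  ring

variable (C) in
/-- The matrix `Ĉ`, obtained from `C` by subtracting the mean off-diagonal entry from every
off-diagonal entry. -/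
noncomputable def centred : Matrix (Fin n) (Fin n) ℝ :=
  C - muEl C • (Jmat n - 1)

variable (C) in
theorem centred_apply_of_ne {i j : Fin n} (hij : i ≠ j) :
    centred C i j = C i j - muEl C := by
  simp [centred, Jmat, hij]

theorem hollowSym_centred (hC : hollowSym C) : hollowSym (centred C) := by
  have hJ : (Jmat n).IsSymm := rfl
  refine ⟨hC.1.sub ((hJ.sub Matrix.isSymm_one).smul _), fun i ↦ ?_⟩
  simp [centred, Jmat, hC.2]

theorem hollowSym.sum_sum_eq_mul_muEl (hC : hollowSym C) (hn : 2 ≤ n) :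
    ∑ i, ∑ j, C i j = n * (n - 1) * muEl C := by
  have hnR : (2 : ℝ) ≤ n := by exact_mod_cast hn
  have hn1 : (n : ℝ) - 1 ≠ 0 := by linarith
  rw [hC.sum_sum_eq_two_mul_pairSum, muEl]
  field_simp

theorem hollowSym.sum_sum_centred (hC : hollowSym C) (hn : 2 ≤ n) :
    ∑ i, ∑ j, centred C i j = 0 := by
  have hJ : ∑ i : Fin n, ∑ j : Fin n, (Jmat n - 1) i j = n * (n - 1) := by
    simp only [Jmat, Matrix.sub_apply, Matrix.of_apply, Matrix.one_apply, sum_sub_distrib,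
      sum_ite_eq, mem_univ, if_true, sum_const, card_univ, Fintype.card_fin, nsmul_eq_mul]
    ring
  simp only [centred, Matrix.sub_apply C, Matrix.smul_apply, smul_eq_mul, sum_sub_distrib,
    ← mul_sum, hJ, hC.sum_sum_eq_mul_muEl hn]
  ring

theorem hollowSym.sig2El_eq (hC : hollowSym C) :
    sig2El C = 1 / (n * (n - 1)) * ∑ i, ∑ j, centred C i j ^ 2 := by
  have hsq : hollowSym (Matrix.of fun i j ↦ centred C i j ^ 2) :=
    ⟨Matrix.IsSymm.ext fun i j ↦ by simp only [Matrix.of_apply, (hollowSym_centred hC).1.apply],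
      fun i ↦ by simp [(hollowSym_centred hC).2]⟩
  have hpair : ∑ i, ∑ j with i < j, (C i j - muEl C) ^ 2
      = pairSum (Matrix.of fun i j ↦ centred C i j ^ 2) :=
    sum_congr rfl fun i _ ↦ sum_congr rfl fun j hj ↦ by
      rw [Matrix.of_apply, centred_apply_of_ne C (mem_filter.1 hj).2.ne]
  have hsum := hsq.sum_sum_eq_two_mul_pairSum
  simp only [Matrix.of_apply] at hsum
  rw [sig2El, hpair, hsum]
  ring

variable (C) in
theorem pairingWeight_centred {σ : Equiv.Perm (Fin n)} (hσ : σ ∈ pairingPerms (Fin n)) :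
    pairingWeight (centred C) σ = pairingWeight C σ - n * muEl C := by
  simp only [pairingWeight, centred_apply_of_ne C (mem_pairingPerms.1 hσ _).1.symm, sum_sub_distrib,
    sum_const, card_univ, Fintype.card_fin, nsmul_eq_mul]

theorem hollowSym.muSum_eq (hC : hollowSym C) (hn : 2 ≤ n) (he : Even n) :
    muSum n C = n * muEl C / 2 := by
  have hnR : (2 : ℝ) ≤ n := by exact_mod_cast hn
  have hn1 : (n : ℝ) - 1 ≠ 0 := by linarith
  have hN : ((n - 1).doubleFactorial : ℝ) ≠ 0 := by exact_mod_cast (Nat.doubleFactorial_pos _).ne'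
  have hfirst := card_sub_one_mul_sum_pairingWeight hC.2
  rw [card_pairingPerms_fin he, Fintype.card_fin, hC.sum_sum_eq_mul_muEl hn] at hfirst
  have hsum : ∑ σ ∈ pairingPerms (Fin n), pairingWeight C σ
      = (n - 1).doubleFactorial * (n * muEl C) :=
    mul_left_cancel₀ hn1 (by linear_combination hfirst)
  rw [muSum, sum_pairings_innerH C fun x ↦ x, ← sum_div, hsum]
  field_simp

theorem hollowSym.sig2Sum_eq (hC : hollowSym C) (hn : 2 ≤ n) (he : Even n) :
    sig2Sum n C = 1 / (4 * (n - 1).doubleFactorial) *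
      ∑ σ ∈ pairingPerms (Fin n), pairingWeight (centred C) σ ^ 2 := by
  have hterm : ∀ σ ∈ pairingPerms (Fin n), (pairingWeight C σ / 2 - muSum n C) ^ 2
      = 1 / 4 * pairingWeight (centred C) σ ^ 2 := fun σ hσ ↦ by
    rw [pairingWeight_centred C hσ, hC.muSum_eq hn he]
    ring
  rw [sig2Sum, sum_pairings_innerH C fun x ↦ (x - muSum n C) ^ 2, sum_congr rfl hterm, ← mul_sum]
  ring

end Compatibility

theorem stmt14 (n : ℕ) (hn : 4 ≤ n) (he : Even n) (C : Matrix (Fin n) (Fin n) ℝ)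
    (hC : hollowSym C) (Chat : Matrix (Fin n) (Fin n) ℝ)
    (hChat : Chat = C - muEl C • (Jmat n - 1)) :
    sig2Sum n C
      = ((n : ℝ) * ((n : ℝ) - 2) / (2 * ((n : ℝ) - 3))) * sig2El C
        - (1 / (((n : ℝ) - 1) * ((n : ℝ) - 3))) * ∑ k : Fin n, innerH (adjR k) Chat ^ 2 := by
  obtain rfl : Chat = centred C := hChat
  have hcentred : hollowSym (centred C) := hollowSym_centred hC
  have hnR : (4 : ℝ) ≤ n := by exact_mod_cast hn
  have hn0 : (n : ℝ) ≠ 0 := by linarith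
  have hn1 : (n : ℝ) - 1 ≠ 0 := by linarith
  have hn3 : (n : ℝ) - 3 ≠ 0 := by linarith
  have hN : ((n - 1).doubleFactorial : ℝ) ≠ 0 := by exact_mod_cast (Nat.doubleFactorial_pos _).ne'
  have hsecond := card_sub_one_mul_card_sub_three_mul_sum_pairingWeight_sq hcentred.1 hcentred.2
  rw [hC.sum_sum_centred (by lia), card_pairingPerms_fin he,
    Fintype.card_fin] at hsecond
  rw [hC.sig2Sum_eq (by lia) he, hC.sig2El_eq]
  simp only [hcentred.innerH_adjR]
  field_simp
  linear_combination 2 * hsecond
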